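/- arXiv:1109.6697 — 2 statements merged into one kernel-verified Lean document; each statement's English description precedes it below -/
import Mathlib

section
/- The action of Γ_Q on R(Q,−k) by left multiplication has only finitely many orbits; that is, there is a finite subset F of R(Q,−k) such that every x ∈ R(Q,−k) equals g·y for some g ∈ Γ_Q and some y ∈ F. -/
open Matrix

/-- A symmetric integer matrix whose quadratic form is positive at nonzero integer vectors. -/
structure IntPosDef {ι : Type*} [Fintype ι] (M : Matrix ι ι ℤ) : Prop where
  symm : M.IsSymm
  pos : ∀ x : ι → ℤ, x ≠ 0 → 0 < x ⬝ᵥ M *ᵥ x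

section IntegralForms

variable {ι : Type*} [Fintype ι]

lemma Matrix.IsSymm.dotProduct_mulVec_comm {M : Matrix ι ι ℤ} (hM : M.IsSymm) (v w : ι → ℤ) :
    v ⬝ᵥ M *ᵥ w = w ⬝ᵥ M *ᵥ v := by
  rw [dotProduct_mulVec, ← mulVec_transpose, hM.eq, dotProduct_comm]

lemma Matrix.transpose_mul_mul_apply (M h : Matrix ι ι ℤ) (i j : ι) :
    (hᵀ * M * h) i j = h.col i ⬝ᵥ M *ᵥ h.col j := by
  rw [Matrix.mul_assoc, Matrix.mul_apply_eq_vecMul]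
  simp only [Matrix.vecMul, Matrix.mul_apply, dotProduct, mulVec, Matrix.col_apply,
    Matrix.transpose_apply]

lemma Matrix.dotProduct_transpose_mul_mul_mulVec (M h : Matrix ι ι ℤ) (v : ι → ℤ) :
    v ⬝ᵥ (hᵀ * M * h) *ᵥ v = (h *ᵥ v) ⬝ᵥ M *ᵥ (h *ᵥ v) := by
  rw [← mulVec_mulVec, ← mulVec_mulVec, dotProduct_mulVec, vecMul_transpose]

lemma Matrix.col_mul (g h : Matrix ι ι ℤ) (i : ι) : (g * h).col i = g *ᵥ h.col i := by
  ext j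
  simp [Matrix.mul_apply, mulVec, dotProduct]

lemma IntPosDef.nonneg {M : Matrix ι ι ℤ} (hM : IntPosDef M) (x : ι → ℤ) :
    0 ≤ x ⬝ᵥ M *ᵥ x := by
  by_cases hx : x = 0
  · simp [hx]
  · exact (hM.pos x hx).le

variable [DecidableEq ι]

lemma Matrix.mulVec_eq_zero_of_isUnit_det {h : Matrix ι ι ℤ} (hh : IsUnit h.det) {v : ι → ℤ}
    (hv : h *ᵥ v = 0) : v = 0 :=
  Matrix.eq_zero_of_mulVec_eq_zero hh.ne_zero hv

lemma Matrix.col_ne_zero_of_isUnit_det {h : Matrix ι ι ℤ} (hh : IsUnit h.det) (i : ι) :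
    h.col i ≠ 0 := fun h0 =>
  hh.ne_zero (Matrix.det_eq_zero_of_column_eq_zero i fun j => congrFun h0 j)

lemma IntPosDef.congruent {M h : Matrix ι ι ℤ} (hM : IntPosDef M) (hh : IsUnit h.det) :
    IntPosDef (hᵀ * M * h) where
  symm := by
    rw [Matrix.IsSymm, transpose_mul, transpose_mul, transpose_transpose, hM.symm.eq,
      Matrix.mul_assoc]
  pos x hx := by
    rw [Matrix.dotProduct_transpose_mul_mul_mulVec]
    exact hM.pos _ fun h0 => hx (Matrix.mulVec_eq_zero_of_isUnit_det hh h0)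

lemma Matrix.det_congruent {M h : Matrix ι ι ℤ} (hh : IsUnit h.det) :
    (hᵀ * M * h).det = M.det := by
  rw [det_mul, det_mul, det_transpose]
  rcases Int.isUnit_iff.mp hh with h1 | h1 <;> rw [h1] <;> ring

end IntegralForms

section Hermite

variable {ι : Type*}

/-- The integral Schur complement `m B - b bᵀ` of the corner `m` in `[[B, b], [bᵀ, m]]`. -/
def intSchur (B : Matrix ι ι ℤ) (b : ι → ℤ) (m : ℤ) : Matrix ι ι ℤ := m • B - vecMulVec b b

/-- The symmetric block matrix `[[B, b], [bᵀ, m]]`. -/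
def bordered (B : Matrix ι ι ℤ) (b : ι → ℤ) (m : ℤ) : Matrix (ι ⊕ Unit) (ι ⊕ Unit) ℤ :=
  fromBlocks B (replicateCol Unit b) (replicateRow Unit b) (of fun _ _ => m)

lemma Matrix.IsSymm.exists_eq_bordered {M : Matrix (ι ⊕ Unit) (ι ⊕ Unit) ℤ} (hM : M.IsSymm) :
    ∃ (B : Matrix ι ι ℤ) (b : ι → ℤ) (m : ℤ), B.IsSymm ∧ M = bordered B b m := by
  refine ⟨M.toBlocks₁₁, fun i => M (.inl i) (.inr ()), M (.inr ()) (.inr ()), ?_, ?_⟩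
  · ext i j
    exact hM.apply _ _
  · ext i j
    rcases i with i | i <;> rcases j with j | j <;> simp [bordered, toBlocks₁₁, hM.apply]

variable [Fintype ι]

lemma bordered_complete_square (B : Matrix ι ι ℤ) (b : ι → ℤ) (m : ℤ) (v : ι → ℤ) (t : ℤ) :
    m * (Sum.elim v (fun _ => t) ⬝ᵥ bordered B b m *ᵥ Sum.elim v (fun _ => t)) =
      v ⬝ᵥ intSchur B b m *ᵥ v + (b ⬝ᵥ v + m * t) ^ 2 := by
  have h1 : replicateCol Unit b *ᵥ (fun _ => t) = t • b := by
    ext i; simp [mulVec, dotProduct, mul_comm]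
  have h2 : replicateRow Unit b *ᵥ v = fun _ => b ⬝ᵥ v := by
    ext i; simp [mulVec, dotProduct]
  have h3 : (of fun _ _ => m : Matrix Unit Unit ℤ) *ᵥ (fun _ => t) = fun _ => m * t := by
    ext i; simp [mulVec, dotProduct]
  have h4 : vecMulVec b b *ᵥ v = (b ⬝ᵥ v) • b := by
    ext i; simp [vecMulVec_mulVec, mul_comm]
  rw [bordered, fromBlocks_mulVec, sumElim_dotProduct_sumElim, intSchur, sub_mulVec, h4]
  simp only [Sum.elim_comp_inl, Sum.elim_comp_inr, h1, h2, h3, smul_mulVec, dotProduct_add,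
    dotProduct_sub, dotProduct_smul, smul_eq_mul, dotProduct_comm v b]
  simp [dotProduct]
  ring

lemma intSchur_posDef {B : Matrix ι ι ℤ} {b : ι → ℤ} {m : ℤ} (hB : B.IsSymm) (hm : 0 < m)
    (hM : IntPosDef (bordered B b m)) : IntPosDef (intSchur B b m) where
  symm := by
    ext i j
    simp [intSchur, vecMulVec_apply, hB.apply i j, mul_comm (b i)]
  pos v hv := by
    have key := bordered_complete_square B b m (m • v) (-(b ⬝ᵥ v))
    have hne : Sum.elim (m • v) (fun _ : Unit => -(b ⬝ᵥ v)) ≠ 0 := fun h0 => by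
      apply hv
      ext i
      have := congrFun h0 (.inl i)
      simpa [hm.ne'] using this
    have hpos := mul_pos hm (hM.pos _ hne)
    rw [key] at hpos
    simp only [mulVec_smul, dotProduct_smul, smul_dotProduct, smul_eq_mul] at hpos
    have : 0 < m ^ 2 * (v ⬝ᵥ intSchur B b m *ᵥ v) := by linarith
    exact pos_of_mul_pos_right this (by positivity)

variable [DecidableEq ι]

lemma det_bordered (B : Matrix ι ι ℤ) (b : ι → ℤ) (m : ℤ) :
    (bordered B b m).det * m ^ Fintype.card ι = (intSchur B b m).det * m := by
  have h : bordered B b m * fromBlocks (diagonal fun _ => m) 0 (-replicateRow Unit b) 1 =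
      fromBlocks (intSchur B b m) (replicateCol Unit b) 0 (of fun _ _ => m) := by
    rw [bordered, fromBlocks_multiply]
    congr 1
    · ext i j; simp [intSchur, Matrix.mul_apply, diagonal_apply, vecMulVec_apply, mul_comm,
        sub_eq_add_neg, -zsmul_eq_mul]
    · simp
    · ext i j; simp [Matrix.mul_apply, diagonal_apply, mul_comm]
    · simp
  have := congrArg det h
  rw [det_mul, det_fromBlocks_zero₁₂, det_fromBlocks_zero₂₁] at this
  simpa using this

lemma Int.exists_four_mul_sq_add_mul_le (s : ℤ) {m : ℤ} (hm : 0 < m) :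
    ∃ t : ℤ, 4 * (s + m * t) ^ 2 ≤ m ^ 2 := by
  have h0 := Int.emod_nonneg s hm.ne'
  have h1 := Int.emod_lt_of_pos s hm
  have h2 := Int.emod_add_mul_ediv s m
  by_cases h : 2 * (s % m) ≤ m
  · refine ⟨-(s / m), ?_⟩
    have : s + m * -(s / m) = s % m := by linarith
    rw [this]
    nlinarith
  · refine ⟨-(s / m) - 1, ?_⟩
    have : s + m * (-(s / m) - 1) = s % m - m := by linarith
    rw [this]
    nlinarith

/-- The Hermite bound with constant `C`: every positive definite form has a basis for which the
product of the diagonal entries is at most `C` times the determinant. -/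
def HermiteBound (ι : Type*) [Fintype ι] [DecidableEq ι] (C : ℕ) : Prop :=
  ∀ M : Matrix ι ι ℤ, IntPosDef M →
    ∃ h : Matrix ι ι ℤ, IsUnit h.det ∧ ∏ i, (h.col i ⬝ᵥ M *ᵥ h.col i) ≤ C * M.det

lemma exists_basis_of_minimal_corner {C : ℕ} (hC : HermiteBound ι C)
    {M : Matrix (ι ⊕ Unit) (ι ⊕ Unit) ℤ} (hM : IntPosDef M)
    (hmin : ∀ h : Matrix (ι ⊕ Unit) (ι ⊕ Unit) ℤ, IsUnit h.det →
      M (.inr ()) (.inr ()) ≤ h.col (.inr ()) ⬝ᵥ M *ᵥ h.col (.inr ())) :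
    ∃ h : Matrix (ι ⊕ Unit) (ι ⊕ Unit) ℤ, IsUnit h.det ∧
      ∏ i, (h.col i ⬝ᵥ M *ᵥ h.col i) ≤ (2 ^ Fintype.card ι * C : ℕ) * M.det := by
  obtain ⟨B, b, m, hB, rfl⟩ := hM.symm.exists_eq_bordered
  have hcorner : bordered B b m (.inr ()) (.inr ()) = m := rfl
  rw [hcorner] at hmin
  have hm : 0 < m := by
    have := hM.pos (Pi.single (.inr ()) 1) (by simp)
    simpa [hcorner] using this
  have hS := intSchur_posDef hB hm hM
  obtain ⟨g, hg, hprod⟩ := hC _ hS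
  choose r hr using fun i => Int.exists_four_mul_sq_add_mul_le (b ⬝ᵥ g.col i) hm
  let h : Matrix (ι ⊕ Unit) (ι ⊕ Unit) ℤ := fromBlocks g 0 (replicateRow Unit r) 1
  have hdet : IsUnit h.det := by
    simpa [h, det_fromBlocks_zero₁₂] using hg
  have hinl (i : ι) : h.col (.inl i) = Sum.elim (g.col i) (fun _ => r i) := by
    ext j; rcases j with j | j <;> simp [h]
  have hinr : h.col (.inr ()) = Pi.single (.inr ()) 1 := by
    ext j; rcases j with j | j <;> simp [h]
  have hge (i : ι) : m ≤ h.col (.inl i) ⬝ᵥ bordered B b m *ᵥ h.col (.inl i) := by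
    have hsw : IsUnit (h.submatrix id (Equiv.swap (Sum.inl i) (Sum.inr ()))).det := by
      rw [det_permute']
      exact (Units.isUnit _).mul hdet
    have hcol : (h.submatrix id (Equiv.swap (Sum.inl i) (Sum.inr ()))).col (.inr ()) =
        h.col (.inl i) := by
      ext j; simp
    simpa [hcol] using hmin _ hsw
  have hle (i : ι) : m * (h.col (.inl i) ⬝ᵥ bordered B b m *ᵥ h.col (.inl i)) ≤
      2 * (g.col i ⬝ᵥ intSchur B b m *ᵥ g.col i) := by
    have h1 := bordered_complete_square B b m (g.col i) (r i)
    rw [← hinl] at h1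
    have h2 := mul_le_mul_of_nonneg_left (hge i) hm.le
    have h3 := hS.nonneg (g.col i)
    nlinarith [hr i]
  refine ⟨h, hdet, ?_⟩
  have hbig := Finset.prod_le_prod (s := Finset.univ)
    (fun i _ => mul_nonneg hm.le (hM.nonneg (h.col (.inl i)))) (fun i _ => hle i)
  rw [Finset.prod_mul_distrib, Finset.prod_mul_distrib, Finset.prod_const, Finset.prod_const,
    Finset.card_univ] at hbig
  have hlast : h.col (.inr ()) ⬝ᵥ bordered B b m *ᵥ h.col (.inr ()) = m := by
    rw [hinr]; simp [hcorner]
  rw [Fintype.prod_sum_type, Fintype.prod_unique (ι := Unit)]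
  change _ * (h.col (.inr ()) ⬝ᵥ bordered B b m *ᵥ h.col (.inr ())) ≤ _
  rw [hlast]
  refine le_of_mul_le_mul_left ?_ (pow_pos hm (Fintype.card ι))
  have hd := det_bordered B b m
  push_cast
  set P := ∏ i, (h.col (.inl i) ⬝ᵥ bordered B b m *ᵥ h.col (.inl i))
  calc m ^ Fintype.card ι * (P * m) = (m ^ Fintype.card ι * P) * m := by ring
    _ ≤ (2 ^ Fintype.card ι * (C * (intSchur B b m).det)) * m :=
        mul_le_mul_of_nonneg_right (hbig.trans (by gcongr)) hm.le
    _ = 2 ^ Fintype.card ι * C * ((intSchur B b m).det * m) := by ring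
    _ = m ^ Fintype.card ι * (2 ^ Fintype.card ι * C * (bordered B b m).det) := by
        rw [← hd]; ring

lemma HermiteBound.sum_unit {C : ℕ} (hC : HermiteBound ι C) :
    HermiteBound (ι ⊕ Unit) (2 ^ Fintype.card ι * C) := by
  intro M hM
  obtain ⟨g, hg, hmin⟩ := exists_minimalFor_of_wellFoundedLT
    (fun h : Matrix (ι ⊕ Unit) (ι ⊕ Unit) ℤ => IsUnit h.det)
    (fun h => (h.col (.inr ()) ⬝ᵥ M *ᵥ h.col (.inr ())).toNat) ⟨1, by simp⟩
  obtain ⟨h, hh, hprod⟩ := exists_basis_of_minimal_corner hC (hM.congruent hg) fun h hh => by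
    have hgh : IsUnit (g * h).det := by rw [det_mul]; exact hg.mul hh
    have hle : (g.col (.inr ()) ⬝ᵥ M *ᵥ g.col (.inr ())).toNat ≤
        ((g * h).col (.inr ()) ⬝ᵥ M *ᵥ (g * h).col (.inr ())).toNat :=
      (le_total _ _).elim id fun hle => hmin hgh hle
    rw [Matrix.transpose_mul_mul_apply, Matrix.dotProduct_transpose_mul_mul_mulVec,
      ← col_mul g h]
    have h1 := hM.nonneg (g.col (.inr ()))
    have h2 := hM.nonneg ((g * h).col (.inr ()))
    omega
  refine ⟨g * h, by rw [det_mul]; exact hg.mul hh, ?_⟩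
  simpa only [col_mul, Matrix.dotProduct_transpose_mul_mul_mulVec, det_congruent hg] using hprod

lemma HermiteBound.of_equiv {κ : Type*} [Fintype κ] [DecidableEq κ] (e : ι ≃ κ) {C : ℕ}
    (hC : HermiteBound ι C) : HermiteBound κ C := by
  intro M hM
  have key (v w : κ → ℤ) : (v ∘ e) ⬝ᵥ M.submatrix e e *ᵥ (w ∘ e) = v ⬝ᵥ M *ᵥ w := by
    rw [submatrix_mulVec_equiv, Function.comp_assoc, e.self_comp_symm, Function.comp_id]
    exact comp_equiv_dotProduct_comp_equiv _ _ e
  obtain ⟨h, hh, hprod⟩ := hC (M.submatrix e e) ⟨hM.symm.submatrix e, fun x hx => by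
    have hx' : x = (x ∘ e.symm) ∘ e := by ext; simp
    rw [hx', key]
    refine hM.pos _ fun h0 => hx ?_
    rw [hx', h0]; rfl⟩
  refine ⟨h.submatrix e.symm e.symm, by rwa [det_submatrix_equiv_self], ?_⟩
  rw [det_submatrix_equiv_self] at hprod
  refine le_of_eq_of_le ?_ hprod
  refine (Fintype.prod_equiv e _ _ fun i => ?_).symm
  rw [← key]
  congr! 2 <;> ext j <;> simp

lemma exists_hermiteBound (n : ℕ) : ∃ C, HermiteBound (Fin n) C := by
  induction n with
  | zero => exact ⟨1, fun M _ => ⟨1, by simp, by simp⟩⟩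
  | succ n ih =>
    obtain ⟨C, hC⟩ := ih
    exact ⟨_, hC.sum_unit.of_equiv
      ((Equiv.sumCongr (Equiv.refl _) (Equiv.ofUnique Unit (Fin 1))).trans finSumFinEquiv)⟩

/-- Positive definite integral forms of bounded determinant have bases of bounded Gram matrix. -/
lemma exists_gram_bound (n : ℕ) (D : ℕ) : ∃ K : ℤ,
    ∀ M : Matrix (Fin n ⊕ Unit) (Fin n ⊕ Unit) ℤ, IntPosDef M → M.det ≤ D →
      ∃ h : Matrix (Fin n ⊕ Unit) (Fin n ⊕ Unit) ℤ, IsUnit h.det ∧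
        ∀ i j, |(hᵀ * M * h) i j| ≤ K := by
  obtain ⟨C, hC⟩ := exists_hermiteBound n
  refine ⟨(2 ^ Fintype.card (Fin n) * C : ℕ) * D, fun M hM hD => ?_⟩
  obtain ⟨h, hh, hprod⟩ := hC.sum_unit M hM
  have hdiag (i : Fin n ⊕ Unit) : h.col i ⬝ᵥ M *ᵥ h.col i ≤
      (2 ^ Fintype.card (Fin n) * C : ℕ) * D := by
    have hone (j : Fin n ⊕ Unit) : 1 ≤ h.col j ⬝ᵥ M *ᵥ h.col j :=
      hM.pos _ (col_ne_zero_of_isUnit_det hh j)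
    refine le_trans ?_ (hprod.trans (by gcongr))
    rw [← Finset.mul_prod_erase _ _ (Finset.mem_univ i)]
    refine le_mul_of_one_le_right (by linarith [hone i]) ?_
    exact Finset.one_le_prod fun j _ => hone j
  refine ⟨h, hh, fun i j => ?_⟩
  rw [transpose_mul_mul_apply]
  have hadd := hM.nonneg (h.col i + h.col j)
  have hsub := hM.nonneg (h.col i - h.col j)
  simp only [mulVec_add, mulVec_sub, dotProduct_add, dotProduct_sub, add_dotProduct,
    sub_dotProduct, hM.symm.dotProduct_mulVec_comm (h.col j) (h.col i)] at hadd hsub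
  rw [abs_le]
  constructor <;> linarith [hdiag i, hdiag j]

end Hermite

section Majorant

variable {ι : Type*} [Fintype ι]

/-- The multiple by `k` of the majorant of `Q` attached to a vector `x` with `Q[x] = -k`. -/
def majorant (Q : Matrix ι ι ℤ) (k : ℤ) (x : ι → ℤ) : Matrix ι ι ℤ :=
  k • Q + 2 • vecMulVec (Q *ᵥ x) (Q *ᵥ x)

lemma dotProduct_majorant_mulVec (Q : Matrix ι ι ℤ) (k : ℤ) (x v : ι → ℤ) :
    v ⬝ᵥ majorant Q k x *ᵥ v = k * (v ⬝ᵥ Q *ᵥ v) + 2 * (v ⬝ᵥ Q *ᵥ x) ^ 2 := by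
  have h : vecMulVec (Q *ᵥ x) (Q *ᵥ x) *ᵥ v = (v ⬝ᵥ Q *ᵥ x) • (Q *ᵥ x) := by
    ext i; simp [vecMulVec_mulVec, mul_comm, dotProduct_comm v]
  rw [majorant, add_mulVec, smul_mulVec, smul_mulVec, h, dotProduct_add, dotProduct_smul,
    dotProduct_smul, dotProduct_smul]
  simp only [smul_eq_mul, nsmul_eq_mul]
  push_cast
  ring

variable {Q : Matrix ι ι ℤ} {k : ℤ} {x : ι → ℤ}

lemma dotProduct_mulVec_projection (hQ : Q.IsSymm) (hx : x ⬝ᵥ Q *ᵥ x = -k) (v : ι → ℤ) :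
    x ⬝ᵥ Q *ᵥ (k • v + (v ⬝ᵥ Q *ᵥ x) • x) = 0 ∧
      (k • v + (v ⬝ᵥ Q *ᵥ x) • x) ⬝ᵥ Q *ᵥ (k • v + (v ⬝ᵥ Q *ᵥ x) • x) =
        k * (k * (v ⬝ᵥ Q *ᵥ v) + (v ⬝ᵥ Q *ᵥ x) ^ 2) := by
  simp only [mulVec_add, mulVec_smul, dotProduct_add, add_dotProduct, dotProduct_smul,
    smul_dotProduct, smul_eq_mul, hx, hQ.dotProduct_mulVec_comm x v]
  constructor <;> ring

lemma sq_dotProduct_le_majorant (hQ : Q.IsSymm) (hk : 0 < k) (hx : x ⬝ᵥ Q *ᵥ x = -k)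
    (hperp : ∀ w, x ⬝ᵥ Q *ᵥ w = 0 → w ≠ 0 → 0 < w ⬝ᵥ Q *ᵥ w) (v : ι → ℤ) :
    (v ⬝ᵥ Q *ᵥ x) ^ 2 ≤ v ⬝ᵥ majorant Q k x *ᵥ v := by
  obtain ⟨h1, h2⟩ := dotProduct_mulVec_projection hQ hx v
  have h3 : 0 ≤ k * (k * (v ⬝ᵥ Q *ᵥ v) + (v ⬝ᵥ Q *ᵥ x) ^ 2) := by
    rw [← h2]
    by_cases h0 : k • v + (v ⬝ᵥ Q *ᵥ x) • x = 0
    · rw [h0, zero_dotProduct]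
    · exact (hperp _ h1 h0).le
  have h4 := nonneg_of_mul_nonneg_right h3 hk
  rw [dotProduct_majorant_mulVec]
  linarith

lemma majorant_posDef (hQ : Q.IsSymm) (hk : 0 < k) (hx : x ⬝ᵥ Q *ᵥ x = -k)
    (hperp : ∀ w, x ⬝ᵥ Q *ᵥ w = 0 → w ≠ 0 → 0 < w ⬝ᵥ Q *ᵥ w) : IntPosDef (majorant Q k x) where
  symm := by
    ext i j
    simp only [majorant, Matrix.transpose_apply, Matrix.add_apply, Matrix.smul_apply,
      vecMulVec_apply, hQ.apply i j, mul_comm ((Q *ᵥ x) i)]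
  pos v hv := by
    by_cases hB : v ⬝ᵥ Q *ᵥ x = 0
    · rw [dotProduct_majorant_mulVec, hB]
      have := hperp v (by rw [hQ.dotProduct_mulVec_comm, hB]) hv
      nlinarith
    · exact lt_of_lt_of_le (by positivity) (sq_dotProduct_le_majorant hQ hk hx hperp v)

variable [DecidableEq ι]

lemma det_majorant_le (hx : x ⬝ᵥ Q *ᵥ x = -k) :
    (majorant Q k x).det ≤ (Q.det.natAbs * k.natAbs ^ Fintype.card ι : ℕ) := by
  let T : Matrix ι ι ℤ := k • 1 + 2 • vecMulVec x (Q *ᵥ x)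
  have hM : majorant Q k x = Q * T := by
    simp only [majorant, T, Matrix.mul_add, Matrix.mul_smul, Matrix.mul_one, mul_vecMulVec]
  have hxx : (Q *ᵥ x) ⬝ᵥ x = -k := by rw [dotProduct_comm, hx]
  have hT : T * T = k ^ 2 • (1 : Matrix ι ι ℤ) := by
    simp only [T, Matrix.mul_add, Matrix.add_mul, Matrix.mul_smul, Matrix.smul_mul,
      Matrix.mul_one, Matrix.one_mul, vecMulVec_mul_vecMulVec, hxx]
    ext i j
    simp only [Matrix.add_apply, Matrix.smul_apply, vecMulVec_apply, Pi.smul_apply,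
      smul_eq_mul]
    simp only [nsmul_eq_mul]
    push_cast
    ring
  have hdet : T.det.natAbs = k.natAbs ^ Fintype.card ι := by
    have h := congrArg (fun M => M.det) hT
    simp only [det_mul, det_smul, det_one, mul_one, ← pow_mul] at h
    rw [mul_comm 2, pow_mul, ← sq] at h
    rw [← Int.natAbs_pow]
    exact Int.natAbs_eq_iff_sq_eq.mpr h
  rw [hM, ← hdet, ← Int.natAbs_mul, det_mul]
  exact Int.le_natAbs

/-- A vector of norm `-k` is determined up to isometry by the Gram matrix of its majorant and the
inner products with it, both relative to some basis. -/
lemma exists_isometry_of_majorant_eq {x y : ι → ℤ} {g h : Matrix ι ι ℤ} (hk : k ≠ 0)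
    (hQ : Q.det ≠ 0) (hg : IsUnit g.det) (hh : IsUnit h.det)
    (hM : gᵀ * majorant Q k x * g = hᵀ * majorant Q k y * h)
    (hu : gᵀ *ᵥ (Q *ᵥ x) = hᵀ *ᵥ (Q *ᵥ y)) :
    ∃ f : Matrix ι ι ℤ, IsUnit f.det ∧ fᵀ * Q * f = Q ∧ f *ᵥ y = x := by
  have hexp (g : Matrix ι ι ℤ) (x : ι → ℤ) : gᵀ * majorant Q k x * g =
      k • (gᵀ * Q * g) + 2 • vecMulVec (gᵀ *ᵥ (Q *ᵥ x)) (gᵀ *ᵥ (Q *ᵥ x)) := by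
    simp only [majorant, Matrix.mul_add, Matrix.add_mul, Matrix.mul_smul, Matrix.smul_mul,
      mul_vecMulVec, vecMulVec_mul, mulVec_transpose]
  rw [hexp, hexp, hu, add_left_inj] at hM
  have hQQ : gᵀ * Q * g = hᵀ * Q * h := smul_right_injective _ hk hM
  have hhh : h * h⁻¹ = 1 := mul_nonsing_inv h hh
  have hiso : (g * h⁻¹)ᵀ * Q * (g * h⁻¹) = Q := by
    calc (g * h⁻¹)ᵀ * Q * (g * h⁻¹) = (h⁻¹)ᵀ * (gᵀ * Q * g) * h⁻¹ := by
          rw [transpose_mul]; noncomm_ring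
      _ = (h * h⁻¹)ᵀ * Q * (h * h⁻¹) := by rw [hQQ, transpose_mul]; noncomm_ring
      _ = Q := by simp [hhh]
  refine ⟨g * h⁻¹, ?_, hiso, ?_⟩
  · rw [det_mul]
    exact hg.mul (isUnit_nonsing_inv_det h hh)
  · have hinj : Function.Injective (gᵀ * Q).mulVec :=
      mulVec_injective_of_det_ne_zero (by
        rw [det_mul, det_transpose]; exact mul_ne_zero hg.ne_zero hQ)
    apply hinj
    rw [mulVec_mulVec, ← Matrix.mul_assoc, hQQ, Matrix.mul_assoc, hhh, Matrix.mul_one,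
      ← mulVec_mulVec, ← mulVec_mulVec, hu]

end Majorant

section Lorentzian

variable {n : ℕ} {A : Matrix (Fin n) (Fin n) ℤ} {a k : ℤ}

lemma Sum.elim_dotProduct_lorentz_mulVec (A : Matrix (Fin n) (Fin n) ℤ) (a : ℤ)
    (p q : Fin n → ℤ) (s t : ℤ) :
    Sum.elim p (fun _ : Unit => s) ⬝ᵥ
      fromBlocks A 0 0 (of fun _ _ => -a) *ᵥ Sum.elim q (fun _ : Unit => t) =
      p ⬝ᵥ A *ᵥ q - a * s * t := by
  rw [fromBlocks_mulVec, sumElim_dotProduct_sumElim]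
  simp [mulVec, dotProduct]
  ring

lemma IntPosDef.sq_dotProduct_le (hA : IntPosDef A) (p q : Fin n → ℤ) (hq : q ≠ 0) :
    (p ⬝ᵥ A *ᵥ q) ^ 2 ≤ (p ⬝ᵥ A *ᵥ p) * (q ⬝ᵥ A *ᵥ q) := by
  have h := hA.nonneg ((q ⬝ᵥ A *ᵥ q) • p - (p ⬝ᵥ A *ᵥ q) • q)
  have hpos := hA.pos q hq
  simp only [mulVec_sub, mulVec_smul, dotProduct_sub, sub_dotProduct, dotProduct_smul,
    smul_dotProduct, smul_eq_mul, hA.symm.dotProduct_mulVec_comm q p] at h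
  have h' : 0 ≤ (q ⬝ᵥ A *ᵥ q) * ((p ⬝ᵥ A *ᵥ p) * (q ⬝ᵥ A *ᵥ q) - (p ⬝ᵥ A *ᵥ q) ^ 2) := by
    linarith
  linarith [nonneg_of_mul_nonneg_right h' hpos]

lemma lorentz_pos_of_perp (hA : IntPosDef A) (ha : 0 < a) (hk : 0 < k)
    {x : Fin n ⊕ Unit → ℤ} (hx : x ⬝ᵥ fromBlocks A 0 0 (of fun _ _ => -a) *ᵥ x = -k)
    (w : Fin n ⊕ Unit → ℤ) (hw : x ⬝ᵥ fromBlocks A 0 0 (of fun _ _ => -a) *ᵥ w = 0)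
    (hw0 : w ≠ 0) : 0 < w ⬝ᵥ fromBlocks A 0 0 (of fun _ _ => -a) *ᵥ w := by
  have hsplit (v : Fin n ⊕ Unit → ℤ) : ∃ q t, v = Sum.elim q (fun _ : Unit => t) :=
    ⟨v ∘ .inl, v (.inr ()), by ext i; rcases i with i | i <;> rfl⟩
  obtain ⟨p, s, rfl⟩ := hsplit x
  obtain ⟨q, t, rfl⟩ := hsplit w
  rw [Sum.elim_dotProduct_lorentz_mulVec] at *
  have hp := hA.nonneg p
  have hs : 0 < a * s ^ 2 := by nlinarith
  by_cases hq : q = 0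
  · subst hq
    have hs0 : s ≠ 0 := by rintro rfl; simp at hs
    have ht : t = 0 := by simpa [ha.ne', hs0] using hw
    exact absurd (by ext i; rcases i with i | i <;> simp [ht]) hw0
  · have hcs := hA.sq_dotProduct_le p q hq
    have hqpos := hA.pos q hq
    have h1 : p ⬝ᵥ A *ᵥ q = a * s * t := by linarith
    have h2 : p ⬝ᵥ A *ᵥ p = a * s ^ 2 - k := by linarith
    rw [h1, h2] at hcs
    have h3 : 0 < a * s ^ 2 * (q ⬝ᵥ A *ᵥ q - a * t * t) := by nlinarith
    exact pos_of_mul_pos_right h3 hs.le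

end Lorentzian

lemma Set.exists_finset_representatives {ι : Type*} {α : Type*} [Preorder α] [LocallyFiniteOrder α]
    (S : Set ι) (f : ι → α) (l u : α) (hf : ∀ x ∈ S, f x ∈ Set.Icc l u) :
    ∃ F : Finset ι, (∀ y ∈ F, y ∈ S) ∧ ∀ x ∈ S, ∃ y ∈ F, f y = f x := by
  obtain ⟨T, hTS, hT⟩ := Set.exists_subset_bijOn S f
  have himage : (f '' S).Finite :=
    (Set.finite_Icc l u).subset (Set.image_subset_iff.mpr hf)
  have hfin : T.Finite := Set.Finite.of_finite_image (hT.image_eq ▸ himage) hT.injOn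
  refine ⟨hfin.toFinset, fun y hy => hTS (hfin.mem_toFinset.mp hy), fun x hx => ?_⟩
  obtain ⟨y, hy, hyx⟩ := hT.surjOn (Set.mem_image_of_mem f hx)
  exact ⟨y, hfin.mem_toFinset.mpr hy, hyx⟩

/-- The action of `Γ_Q` on `R(Q,−k)` by left multiplication has only finitely many
orbits: there is a finite subset `F` of `R(Q,−k)` such that every `x ∈ R(Q,−k)`
equals `g · y` for some `g ∈ Γ_Q` and some `y ∈ F`. Here `Q = diag(A, -a)` with `A`
an `n × n` symmetric positive definite integer matrix and `a` a positive integer. -/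
theorem finitely_many_orbits_real (n : ℕ) (hn : 1 ≤ n)
    (A : Matrix (Fin n) (Fin n) ℤ) (hAsymm : A.IsSymm)
    (hApos : ∀ x : Fin n → ℤ, x ≠ 0 → 0 < x ⬝ᵥ A.mulVec x)
    (a : ℤ) (ha : 0 < a) (k : ℤ) (hk : 0 < k)
    (Q : Matrix (Fin n ⊕ Unit) (Fin n ⊕ Unit) ℤ)
    (hQ : Q = Matrix.fromBlocks A 0 0 (Matrix.of fun _ _ => -a)) :
    ∃ F : Finset ((Fin n ⊕ Unit) → ℤ),
      (∀ y ∈ F, y ⬝ᵥ Q.mulVec y = -k) ∧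
      ∀ x : (Fin n ⊕ Unit) → ℤ, x ⬝ᵥ Q.mulVec x = -k →
        ∃ y ∈ F, ∃ g : Matrix (Fin n ⊕ Unit) (Fin n ⊕ Unit) ℤ,
          IsUnit g.det ∧ gᵀ * Q * g = Q ∧ g.mulVec y = x := by
  classical
  subst hQ
  set Q : Matrix (Fin n ⊕ Unit) (Fin n ⊕ Unit) ℤ := fromBlocks A 0 0 (of fun _ _ => -a) with hQ
  have hA : IntPosDef A := ⟨hAsymm, hApos⟩
  have hQs : Q.IsSymm := by
    rw [hQ, Matrix.isSymm_fromBlocks_iff]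
    exact ⟨hAsymm, by simp, by simp, rfl⟩
  have hperp (x : Fin n ⊕ Unit → ℤ) (hx : x ⬝ᵥ Q *ᵥ x = -k) := lorentz_pos_of_perp hA ha hk hx
  have hQdet (x : Fin n ⊕ Unit → ℤ) (hx : x ⬝ᵥ Q *ᵥ x = -k) : Q.det ≠ 0 := fun h0 => by
    obtain ⟨v, hv, hQv⟩ := Matrix.exists_mulVec_eq_zero_iff.mpr h0
    have := hperp x hx v (by rw [hQv, dotProduct_zero]) hv
    rw [hQv, dotProduct_zero] at this
    exact this.false
  obtain ⟨K, hK⟩ := exists_gram_bound n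
    (Q.det.natAbs * k.natAbs ^ Fintype.card (Fin n ⊕ Unit))
  choose! h hh hbound using fun (x : Fin n ⊕ Unit → ℤ) (hx : x ⬝ᵥ Q *ᵥ x = -k) =>
    hK _ (majorant_posDef hQs hk hx (hperp x hx)) (det_majorant_le hx)
  have hboundVec (x : Fin n ⊕ Unit → ℤ) (hx : x ⬝ᵥ Q *ᵥ x = -k) (i : Fin n ⊕ Unit) :
      |((h x)ᵀ *ᵥ (Q *ᵥ x)) i| ≤ K := by
    have h1 := sq_dotProduct_le_majorant hQs hk hx (hperp x hx) ((h x).col i)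
    rw [← transpose_mul_mul_apply] at h1
    have h2 := (abs_le.mp (hbound x hx i i)).2
    have h3 : ((h x)ᵀ *ᵥ (Q *ᵥ x)) i = (h x).col i ⬝ᵥ Q *ᵥ x := rfl
    rw [h3]
    exact (Int.le_self_sq _).trans (by rw [sq_abs]; exact h1.trans h2)
  let f : (Fin n ⊕ Unit → ℤ) → (Fin n ⊕ Unit → Fin n ⊕ Unit → ℤ) × (Fin n ⊕ Unit → ℤ) :=
    fun x => ((h x)ᵀ * majorant Q k x * h x, (h x)ᵀ *ᵥ (Q *ᵥ x))
  obtain ⟨F, hFS, hF⟩ := Set.exists_finset_representatives {x | x ⬝ᵥ Q *ᵥ x = -k} f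
    (fun _ _ => -K, fun _ => -K) (fun _ _ => K, fun _ => K) fun x hx => Set.mem_Icc.mpr
      ⟨Prod.mk_le_mk.mpr ⟨fun i j => (abs_le.mp (hbound x hx i j)).1,
          fun i => (abs_le.mp (hboundVec x hx i)).1⟩,
        Prod.mk_le_mk.mpr ⟨fun i j => (abs_le.mp (hbound x hx i j)).2,
          fun i => (abs_le.mp (hboundVec x hx i)).2⟩⟩
  refine ⟨F, hFS, fun x hx => ?_⟩
  obtain ⟨y, hy, hyx⟩ := hF x hx
  exact ⟨y, hy, exists_isometry_of_majorant_eq hk.ne' (hQdet x hx) (hh x hx) (hh y (hFS y hy))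
    (congrArg Prod.fst hyx).symm (congrArg Prod.snd hyx).symm⟩
end

section
/- (Local density computation.) For Q = I_{2,1} over the Gaussian integers and k = 1: for every prime p, the limit δ_p := lim_{j→∞} p^{−5j}·#{x ∈ (ℤ[i]/p^jℤ[i])³ : x_1x̄_1 + x_2x̄_2 − x_3x̄_3 = −1 in ℤ[i]/p^jℤ[i]} exists, and the product over all primes satisfies ∏_p δ_p = 2³·3·π^{−3} = 24/π³. -/
open Filter Topology

/-- The completely multiplicative function `n ↦ χ₄(n) / n³`. -/
noncomputable def chiFourDivCube : ℕ →*₀ ℝ where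
  toFun n := (ZMod.χ₄ n : ℝ) / (n : ℝ) ^ 3
  map_zero' := by simp
  map_one' := by simp
  map_mul' m n := by
    push_cast
    rw [map_mul]
    push_cast
    rw [mul_pow, mul_div_mul_comm]

lemma chiFourDivCube_apply (n : ℕ) : chiFourDivCube n = (ZMod.χ₄ n : ℝ) / (n : ℝ) ^ 3 := rfl

lemma sin_pi_mul_nat_div_two (n : ℕ) : Real.sin (Real.pi * n / 2) = (ZMod.χ₄ n : ℝ) := by
  have hper : Real.sin (Real.pi * n / 2) = Real.sin (Real.pi * (n % 4 : ℕ) / 2) := by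
    conv_lhs => rw [← Nat.mod_add_div n 4]
    rw [← Real.sin_add_nat_mul_two_pi (Real.pi * (n % 4 : ℕ) / 2) (n / 4)]
    congr 1
    push_cast
    ring
  have hmod : ((n : ℕ) : ZMod 4) = ((n % 4 : ℕ) : ZMod 4) := by simp
  rw [hper, hmod]
  have hlt : n % 4 < 4 := Nat.mod_lt _ (by norm_num)
  generalize n % 4 = r at hlt
  interval_cases r
  · simp
  · simp
  · have : ZMod.χ₄ ((2 : ℕ) : ZMod 4) = 0 := by decide
    rw [this]
    simp
  · have : ZMod.χ₄ ((3 : ℕ) : ZMod 4) = -1 := by decide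
    rw [this, show Real.pi * (3 : ℕ) / 2 = Real.pi / 2 + Real.pi by push_cast; ring,
      Real.sin_add_pi]
    simp

lemma hasSum_chiFourDivCube : HasSum chiFourDivCube (Real.pi ^ 3 / 32) := by
  convert hasSum_L_function_mod_four_eval_three using 2 with n
  rw [chiFourDivCube_apply, sin_pi_mul_nat_div_two]
  ring

lemma tendsto_prod_one_sub_chiFourDivCube :
    Tendsto (fun N : ℕ => ∏ p ∈ (Finset.range N).filter Nat.Prime, (1 - chiFourDivCube p))
      atTop (𝓝 (32 / Real.pi ^ 3)) := by
  have h := (EulerProduct.eulerProduct_completely_multiplicative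
    hasSum_chiFourDivCube.summable.norm).inv₀ (by
      rw [hasSum_chiFourDivCube.tsum_eq]
      positivity)
  rw [hasSum_chiFourDivCube.tsum_eq, inv_div] at h
  refine h.congr fun N => ?_
  simp [Nat.primesBelow]

/-- The local density at `p`. -/
noncomputable def localDensity (p : ℕ) : ℝ := if p = 2 then 3 / 4 else 1 - chiFourDivCube p

lemma tendsto_prod_localDensity :
    Tendsto (fun N : ℕ => ∏ p ∈ (Finset.range N).filter Nat.Prime, localDensity p)
      atTop (𝓝 (2 ^ 3 * 3 / Real.pi ^ 3)) := by
  have h := tendsto_prod_one_sub_chiFourDivCube.const_mul (3 / 4)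
  rw [show 3 / 4 * (32 / Real.pi ^ 3) = 2 ^ 3 * 3 / Real.pi ^ 3 by ring] at h
  refine h.congr' ?_
  filter_upwards [eventually_ge_atTop 3] with N hN
  have hmem : 2 ∈ (Finset.range N).filter Nat.Prime := by simp [Nat.prime_two]; omega
  have htwo : chiFourDivCube 2 = 0 := by
    rw [chiFourDivCube_apply, show ZMod.χ₄ ((2 : ℕ) : ZMod 4) = 0 by decide]
    simp
  rw [← Finset.mul_prod_erase _ _ hmem, ← Finset.mul_prod_erase _ _ hmem, htwo]
  simp only [localDensity, if_true, sub_zero, one_mul]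
  congr 1
  refine Finset.prod_congr rfl fun p hp => ?_
  rw [if_neg (Finset.ne_of_mem_erase hp)]

/-- The norm form `a² + b²` on pairs. -/
def sumTwoSq {R : Type*} [CommRing R] (v : R × R) : R := v.1 ^ 2 + v.2 ^ 2

/-- The Hermitian form `I_{2,1}` written in real and imaginary parts. -/
def lorentzForm {R : Type*} [CommRing R] (w : Fin 3 → R × R) : R :=
  sumTwoSq (w 0) + sumTwoSq (w 1) - sumTwoSq (w 2)

section Lifting

lemma natCard_preimage_of_card_fiber_eq {α β : Type*} [Finite α] [Finite β] (g : α → β)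
    (T : Set β) (k : ℕ) (h : ∀ t ∈ T, Nat.card (g ⁻¹' {t}) = k) :
    Nat.card (g ⁻¹' T) = Nat.card T * k := by
  have := Fintype.ofFinite T
  let φ : g ⁻¹' T → T := fun x => ⟨g x, x.2⟩
  rw [← Nat.card_congr (Equiv.sigmaFiberEquiv φ), Nat.card_sigma,
    Finset.sum_congr rfl (g := fun _ => k)]
  · simp [Nat.card_eq_fintype_card]
  · rintro ⟨t, ht⟩ -
    rw [← h t ht]
    exact Nat.card_congr
      { toFun x := ⟨x.1.1, congrArg Subtype.val x.2⟩
        invFun y := ⟨⟨y.1, by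
          have hy : g y.1 = t := y.2
          rwa [Set.mem_preimage, hy]⟩, Subtype.ext y.2⟩
        left_inv _ := rfl
        right_inv _ := rfl }

lemma natCard_preimage_mul_natCard {G H : Type*} [AddGroup G] [AddGroup H] [Finite G]
    (f : G →+ H) (hf : Function.Surjective f) (S : Set H) :
    Nat.card (f ⁻¹' S) * Nat.card H = Nat.card S * Nat.card G := by
  have : Finite H := Finite.of_surjective f hf
  have hfib (h : H) : Nat.card (f ⁻¹' {h}) = Nat.card f.ker := by
    obtain ⟨g, rfl⟩ := hf h
    refine Nat.card_congr ((Equiv.addLeft (-g)).subtypeEquiv fun x => ?_)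
    simp [AddMonoidHom.mem_ker, neg_add_eq_zero, eq_comm (a := f x)]
  have hpre (T : Set H) := natCard_preimage_of_card_fiber_eq f T _ fun t _ => hfib t
  have huniv := hpre Set.univ
  rw [Set.preimage_univ, Nat.card_congr (Equiv.Set.univ G), Nat.card_congr (Equiv.Set.univ H)]
    at huniv
  rw [hpre, huniv]
  ring

variable {R S : Type*} [CommRing R] [CommRing S]

lemma lorentzForm_smul (u : R) (w : Fin 3 → R × R) :
    lorentzForm (u • w) = u ^ 2 * lorentzForm w := by
  simp only [lorentzForm, sumTwoSq, Pi.smul_apply, Prod.smul_fst, Prod.smul_snd, smul_eq_mul]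
  ring

lemma natCard_lorentzForm_eq_sq_mul (u : Rˣ) (c : R) :
    Nat.card {w : Fin 3 → R × R | lorentzForm w = (u : R) ^ 2 * c} =
      Nat.card {w : Fin 3 → R × R | lorentzForm w = c} := by
  refine (Nat.card_congr ((MulAction.toPerm u).subtypeEquiv fun w => ?_)).symm
  change lorentzForm w = c ↔ lorentzForm ((u : R) • w) = (u : R) ^ 2 * c
  rw [lorentzForm_smul, (u.isUnit.pow 2).mul_right_inj]

/-- If every element of `R` over `1 : S` is the square of a unit, then the normalized number of
solutions of `lorentzForm w = -1` is the same over `R` and `S`. -/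
lemma natCard_lorentzForm_mul_pow [Finite R] (π : R →+* S) (hπ : Function.Surjective π)
    (hsq : ∀ c : R, π c = 1 → ∃ u : Rˣ, (u : R) ^ 2 = c) :
    Nat.card {w : Fin 3 → R × R | lorentzForm w = -1} * Nat.card S ^ 5 =
      Nat.card {w : Fin 3 → S × S | lorentzForm w = -1} * Nat.card R ^ 5 := by
  have : Finite S := Finite.of_surjective π hπ
  let f : (Fin 3 → R × R) →+ (Fin 3 → S × S) :=
    ((π : R →+ S).prodMap (π : R →+ S)).compLeft (Fin 3)
  have hf : Function.Surjective f :=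
    (Prod.map_surjective.2 ⟨hπ, hπ⟩).comp_left
  have hfQ (w) : lorentzForm (f w) = π (lorentzForm w) := by
    simp [f, lorentzForm, sumTwoSq]
  have h6 := natCard_preimage_mul_natCard f hf {w | lorentzForm w = -1}
  have h1 := natCard_preimage_mul_natCard (π : R →+ S) hπ {-1}
  set F : Set R := (π : R →+ S) ⁻¹' {-1}
  have hset : f ⁻¹' {w | lorentzForm w = -1} = lorentzForm ⁻¹' F := by
    ext w
    change lorentzForm (f w) = -1 ↔ π (lorentzForm w) = -1
    rw [hfQ]
  have hcount : Nat.card (lorentzForm ⁻¹' F) =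
      Nat.card F * Nat.card {w : Fin 3 → R × R | lorentzForm w = -1} := by
    refine natCard_preimage_of_card_fiber_eq _ _ _ fun c hc => ?_
    obtain ⟨u, hu⟩ := hsq (-c) (by
      have : π c = -1 := hc
      simp [this])
    rw [← natCard_lorentzForm_eq_sq_mul u (-1), hu, mul_neg_one, neg_neg]
    rfl
  rw [hset, hcount] at h6
  simp only [Nat.card_fun, Nat.card_prod, Nat.card_unique, Nat.card_fin, one_mul] at h6 h1
  refine Nat.eq_of_mul_eq_mul_left (Nat.card_pos (α := R)) ?_
  rw [← h1] at h6 ⊢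
  linear_combination h6

end Lifting

section Counting

lemma natCard_lorentzForm_eq_sum {R : Type*} [CommRing R] [Fintype R] [DecidableEq R] :
    Nat.card {w : Fin 3 → R × R | lorentzForm w = -1} =
      ∑ m : R, ∑ n : R, Fintype.card {v : R × R // sumTwoSq v = m} *
        Fintype.card {v : R × R // sumTwoSq v = n} *
        Fintype.card {v : R × R // sumTwoSq v = m + n + 1} := by
  let e : {w : Fin 3 → R × R | lorentzForm w = -1} ≃
      Σ m : R, Σ n : R, ({v : R × R // sumTwoSq v = m} × {v : R × R // sumTwoSq v = n}) ×
        {v : R × R // sumTwoSq v = m + n + 1} :=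
    { toFun w := ⟨sumTwoSq (w.1 0), sumTwoSq (w.1 1), (⟨w.1 0, rfl⟩, ⟨w.1 1, rfl⟩), ⟨w.1 2, by
        have h : sumTwoSq (w.1 0) + sumTwoSq (w.1 1) - sumTwoSq (w.1 2) = -1 := w.2
        linear_combination -h⟩⟩
      invFun y := ⟨![y.2.2.1.1, y.2.2.1.2, y.2.2.2], by
        have h₀ := y.2.2.1.1.2
        have h₁ := y.2.2.1.2.2
        have h₂ := y.2.2.2.2
        change sumTwoSq (y.2.2.1.1 : R × R) + sumTwoSq (y.2.2.1.2 : R × R) -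
          sumTwoSq (y.2.2.2 : R × R) = -1
        rw [h₀, h₁, h₂]
        ring⟩
      left_inv w := by
        ext i : 2
        fin_cases i <;> rfl
      right_inv := by
        rintro ⟨m, n, ⟨⟨a, rfl⟩, ⟨b, rfl⟩⟩, ⟨c, hc⟩⟩
        rfl }
  rw [Nat.card_congr e, Nat.card_eq_fintype_card]
  simp only [Fintype.card_sigma, Fintype.card_prod]

lemma natCard_lorentzForm_zmod_eight :
    Nat.card {w : Fin 3 → ZMod 8 × ZMod 8 | lorentzForm w = -1} = 24576 := by
  have h : ∀ m : ZMod 8, Fintype.card {v : ZMod 8 × ZMod 8 // sumTwoSq v = m} =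
      (![8, 16, 16, 0, 8, 16, 0, 0] : Fin 8 → ℕ) m := by
    unfold sumTwoSq
    intro m
    fin_cases m <;> decide +kernel
  simp only [natCard_lorentzForm_eq_sum, h]
  decide +kernel

variable {F : Type*} [Field F] [Fintype F] [DecidableEq F]

lemma sum_quadraticChar_mul_quadraticChar_sub (hF : ringChar F ≠ 2) (m : F) :
    ∑ x : F, quadraticChar F x * quadraticChar F (m - x) =
      -quadraticChar F (-1) + if m = 0 then Fintype.card F * quadraticChar F (-1) else 0 := by
  split_ifs with hm
  · subst hm
    have h (x : F) : quadraticChar F x * quadraticChar F (0 - x) =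
        quadraticChar F (-1) * if x = 0 then 0 else 1 := by
      rw [zero_sub, neg_eq_neg_one_mul, map_mul]
      split_ifs with hx
      · simp [hx]
      · linear_combination quadraticChar F (-1) * quadraticChar_sq_one hx
    simp_rw [h]
    rw [← Finset.mul_sum, Finset.sum_ite, Finset.sum_const_zero, zero_add, Finset.sum_const,
      nsmul_one, Finset.filter_ne' Finset.univ (0 : F), Finset.card_erase_of_mem (Finset.mem_univ _),
      Finset.card_univ, Nat.cast_pred Fintype.card_pos]
    ring
  · have hJ := jacobiSum_nontrivial_inv (quadraticChar_ne_one hF)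
    rw [(quadraticChar_isQuadratic F).inv, jacobiSum] at hJ
    rw [add_zero, ← hJ, ← Equiv.sum_comp (Equiv.mulLeft₀ m hm)]
    refine Finset.sum_congr rfl fun x _ => ?_
    rw [Equiv.mulLeft₀_apply, show m - m * x = m * (1 - x) by ring, map_mul, map_mul]
    linear_combination quadraticChar F x * quadraticChar F (1 - x) * quadraticChar_sq_one hm

lemma card_sumTwoSq_eq (hF : ringChar F ≠ 2) (m : F) :
    (Fintype.card {v : F × F // sumTwoSq v = m} : ℤ) =
      Fintype.card F - quadraticChar F (-1) +
        if m = 0 then Fintype.card F * quadraticChar F (-1) else 0 := by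
  let e : {v : F × F // sumTwoSq v = m} ≃
      Σ x : F, {a : F // a ^ 2 = x} × {b : F // b ^ 2 = m - x} :=
    { toFun v := ⟨v.1.1 ^ 2, ⟨v.1.1, rfl⟩, ⟨v.1.2, by
        have h : v.1.1 ^ 2 + v.1.2 ^ 2 = m := v.2
        linear_combination h⟩⟩
      invFun y := ⟨(y.2.1, y.2.2), by
        change (y.2.1 : F) ^ 2 + (y.2.2 : F) ^ 2 = m
        rw [y.2.1.2, y.2.2.2]
        ring⟩
      left_inv v := rfl
      right_inv := by
        rintro ⟨x, ⟨a, rfl⟩, ⟨b, hb⟩⟩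
        rfl }
  have hsqrt (x : F) : (Fintype.card {a : F // a ^ 2 = x} : ℤ) = quadraticChar F x + 1 := by
    rw [← quadraticChar_card_sqrts hF x, Set.toFinset_card]
    rfl
  have hsum := quadraticChar_sum_zero (F := F) hF
  have hsum' : ∑ x : F, quadraticChar F (m - x) = 0 := by
    rw [← hsum]
    exact Equiv.sum_comp (Equiv.subLeft m) _
  rw [Fintype.card_congr e, Fintype.card_sigma]
  push_cast [Fintype.card_prod]
  simp only [hsqrt, add_mul, mul_add, one_mul, mul_one, Finset.sum_add_distrib, hsum, hsum',
    sum_quadraticChar_mul_quadraticChar_sub hF m]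
  simp
  ring

lemma natCard_lorentzForm_field (hF : ringChar F ≠ 2) :
    (Nat.card {w : Fin 3 → F × F | lorentzForm w = -1} : ℤ) =
      Fintype.card F ^ 5 - quadraticChar F (-1) * Fintype.card F ^ 2 := by
  rw [natCard_lorentzForm_eq_sum]
  push_cast
  simp only [card_sumTwoSq_eq hF]
  have hε : quadraticChar F (-1) ^ 2 = 1 := quadraticChar_sq_one (neg_ne_zero.2 one_ne_zero)
  set ε := quadraticChar F (-1)
  set q : ℤ := (Fintype.card F : ℤ)
  have hinner (m : F) : ∑ n : F, (q - ε + if m = 0 then q * ε else 0) *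
      (q - ε + if n = 0 then q * ε else 0) * (q - ε + if m + n + 1 = 0 then q * ε else 0) =
      (q - ε + if m = 0 then q * ε else 0) * ((q - ε) ^ 2 * q + 2 * (q - ε) * (q * ε) +
        if m = -1 then (q * ε) ^ 2 else 0) := by
    have h (n : F) : m + n + 1 = 0 ↔ n = -m - 1 := by grind
    have h' : -m - 1 = 0 ↔ m = -1 := by grind
    simp only [mul_assoc, h, ← Finset.mul_sum]
    congr 1
    simp only [add_mul, mul_add, Finset.sum_add_distrib, ite_mul, mul_ite, zero_mul, mul_zero,
      Finset.sum_ite_eq', Finset.mem_univ, if_true, Finset.sum_const, Finset.card_univ, nsmul_eq_mul]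
    simp only [h']
    split_ifs <;> ring
  simp only [hinner]
  simp only [add_mul, mul_add, Finset.sum_add_distrib, ite_mul, mul_ite, zero_mul, mul_zero,
      Finset.sum_ite_eq', Finset.mem_univ, if_true, Finset.sum_const, Finset.card_univ, nsmul_eq_mul]
  simp only [show ((-1 : F) = 0) = False by simp, if_false]
  linear_combination -q ^ 2 * ε * hε
end Counting

section Quotient

/-- Reduction of real and imaginary parts modulo `n`. -/
def GaussianInt.reduce (n : ℕ) : GaussianInt →+ ZMod n × ZMod n where
  toFun x := (x.re, x.im)
  map_zero' := by simp
  map_add' x y := by simp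

lemma GaussianInt.reduce_eq_reduce_iff {n : ℕ} {x y : GaussianInt} :
    GaussianInt.reduce n x = GaussianInt.reduce n y ↔
      Ideal.Quotient.mk (Ideal.span {(n : GaussianInt)}) x = Ideal.Quotient.mk _ y := by
  rw [Ideal.Quotient.eq, Ideal.mem_span_singleton]
  have h : (n : GaussianInt) = ((n : ℤ) : GaussianInt) := by simp
  rw [h, Zsqrtd.intCast_dvd, ← sub_eq_zero, ← map_sub]
  change (((x - y).re : ZMod n), ((x - y).im : ZMod n)) = 0 ↔ _
  rw [Prod.mk_eq_zero, ZMod.intCast_zmod_eq_zero_iff_dvd, ZMod.intCast_zmod_eq_zero_iff_dvd]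

lemma GaussianInt.reduce_surjective (n : ℕ) : Function.Surjective (GaussianInt.reduce n) := by
  rintro ⟨a, b⟩
  obtain ⟨a, rfl⟩ := ZMod.intCast_surjective a
  obtain ⟨b, rfl⟩ := ZMod.intCast_surjective b
  exact ⟨⟨a, b⟩, rfl⟩

lemma GaussianInt.natCast_dvd_lorentz_iff (n : ℕ) (x : Fin 3 → GaussianInt) :
    (n : GaussianInt) ∣ star (x 0) * x 0 + star (x 1) * x 1 - star (x 2) * x 2 + 1 ↔
      lorentzForm (fun i => GaussianInt.reduce n (x i)) = -1 := by
  have hn : (n : GaussianInt) = ((n : ℤ) : GaussianInt) := by simp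
  have hstar (z : GaussianInt) : star z * z = ((z.re * z.re + z.im * z.im : ℤ) : GaussianInt) := by
    ext
    · simp [-Int.cast_add, -Int.cast_mul]
    · simp [-Int.cast_add, -Int.cast_mul]
      ring
  have hcast (a b c : ℤ) : (a : GaussianInt) + b - c + 1 = ((a + b - c + 1 : ℤ) : GaussianInt) := by
    push_cast
    rfl
  rw [hn, hstar, hstar, hstar, hcast, Zsqrtd.intCast_dvd_intCast,
    ← ZMod.intCast_zmod_eq_zero_iff_dvd, eq_neg_iff_add_eq_zero]
  simp [lorentzForm, sumTwoSq, GaussianInt.reduce, sq]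

lemma natCard_gaussianInt_solutions (n : ℕ) (z : GaussianInt) (hz : z = n) :
    Nat.card {y : Fin 3 → (GaussianInt ⧸ Ideal.span {z}) |
      ∃ x : Fin 3 → GaussianInt, (∀ i, Ideal.Quotient.mk (Ideal.span {z}) (x i) = y i) ∧
        z ∣ star (x 0) * x 0 + star (x 1) * x 1 - star (x 2) * x 2 + 1} =
      Nat.card {w : Fin 3 → ZMod n × ZMod n | lorentzForm w = -1} := by
  subst hz
  let e : GaussianInt ⧸ Ideal.span {(n : GaussianInt)} ≃ ZMod n × ZMod n := Equiv.ofBijective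
    (Quotient.lift (GaussianInt.reduce n) fun _ _ h =>
      GaussianInt.reduce_eq_reduce_iff.2 (Quotient.sound h)) (by
    constructor
    · rintro ⟨x⟩ ⟨y⟩ h
      exact GaussianInt.reduce_eq_reduce_iff.1 h
    · intro v
      obtain ⟨x, rfl⟩ := GaussianInt.reduce_surjective n v
      exact ⟨Ideal.Quotient.mk _ x, rfl⟩)
  refine Nat.card_congr ((Equiv.arrowCongr (Equiv.refl (Fin 3)) e).subtypeEquiv fun y => ?_)
  obtain ⟨x, rfl⟩ := (Ideal.Quotient.mk_surjective
    (I := Ideal.span {(n : GaussianInt)})).comp_left y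
  change (∃ x' : Fin 3 → GaussianInt, (∀ i, Ideal.Quotient.mk _ (x' i) = Ideal.Quotient.mk _ (x i)) ∧
    _) ↔ lorentzForm (fun i => GaussianInt.reduce n (x i)) = -1
  constructor
  · rintro ⟨x', hx', hd⟩
    rw [GaussianInt.natCast_dvd_lorentz_iff] at hd
    simpa only [GaussianInt.reduce_eq_reduce_iff.2 (hx' _)] using hd
  · intro h
    exact ⟨x, fun _ => rfl, (GaussianInt.natCast_dvd_lorentz_iff n x).2 h⟩

end Quotient

section Density

/-- The normalized number of solutions modulo `p ^ j`. -/
noncomputable def normalizedCount (p j : ℕ) : ℝ :=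
  (p : ℝ) ^ (-(5 * j : ℤ)) *
    (Nat.card {w : Fin 3 → ZMod (p ^ j) × ZMod (p ^ j) | lorentzForm w = -1} : ℝ)

lemma normalizedCount_succ {p j : ℕ} (hp : p.Prime)
    (hsq : ∀ s : ℤ, ∃ u : ℤ, (p : ℤ) ^ (j + 1) ∣ u ^ 2 - (1 + p ^ j * s)) (hj : 1 ≤ j) :
    normalizedCount p (j + 1) = normalizedCount p j := by
  have : NeZero p := ⟨hp.ne_zero⟩
  have h := natCard_lorentzForm_mul_pow
    (ZMod.castHom (pow_dvd_pow p j.le_succ) (ZMod (p ^ j))) (ZMod.castHom_surjective _) (by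
      intro c hc
      obtain ⟨c, rfl⟩ := ZMod.intCast_surjective c
      rw [map_intCast, ← Int.cast_one, eq_comm, ZMod.intCast_eq_intCast_iff_dvd_sub] at hc
      obtain ⟨s, hs⟩ := hc
      push_cast at hs
      obtain ⟨u, hu⟩ := hsq s
      have hpz : ((p : ZMod (p ^ (j + 1)))) ^ (j + 1) = 0 := by
        exact_mod_cast ZMod.natCast_self (p ^ (j + 1))
      have huc : (u : ZMod (p ^ (j + 1))) ^ 2 = (c : ZMod (p ^ (j + 1))) := by
        rw [← sub_eq_zero]
        have := (ZMod.intCast_zmod_eq_zero_iff_dvd (u ^ 2 - (1 + p ^ j * s)) (p ^ (j + 1))).2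
          (by exact_mod_cast hu)
        rw [← hs] at this
        push_cast at this
        linear_combination this
      have hone : (c : ZMod (p ^ (j + 1))) * (1 - p ^ j * s) = 1 := by
        have hc' : (c : ZMod (p ^ (j + 1))) = 1 + p ^ j * s := by
          have : c = 1 + p ^ j * s := by linarith
          rw [this]
          push_cast
          ring
        obtain ⟨k, rfl⟩ := Nat.exists_eq_add_of_le' hj
        rw [hc']
        linear_combination (-(p : ZMod (p ^ (k + 1 + 1))) ^ k * s ^ 2) * hpz
      have hunit : IsUnit (u : ZMod (p ^ (j + 1))) :=
        IsUnit.of_mul_eq_one (u * (1 - p ^ j * s)) (by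
          linear_combination hone + (1 - p ^ j * s) * huc)
      exact ⟨hunit.unit, huc⟩)
  rw [Nat.card_zmod, Nat.card_zmod] at h
  have hp0 : (p : ℝ) ≠ 0 := by exact_mod_cast hp.ne_zero
  have h' := congrArg (Nat.cast (R := ℝ)) h
  push_cast at h'
  rw [normalizedCount, normalizedCount, zpow_neg, zpow_neg, inv_mul_eq_div, inv_mul_eq_div,
    div_eq_div_iff (by positivity) (by positivity)]
  convert h' using 2 <;> rw [← pow_mul, mul_comm _ 5] <;> exact_mod_cast rfl

lemma tendsto_normalizedCount {p k : ℕ}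
    (h : ∀ j, k ≤ j → normalizedCount p (j + 1) = normalizedCount p j) :
    Tendsto (normalizedCount p) atTop (𝓝 (normalizedCount p k)) := by
  refine tendsto_const_nhds.congr' ?_
  filter_upwards [eventually_ge_atTop k] with j hj
  induction j, hj using Nat.le_induction with
  | base => rfl
  | succ j hj ih => rw [h j hj, ih]

lemma exists_sq_dvd_sub_of_odd {p j : ℕ} (hp : Odd p) (hj : 1 ≤ j) (s : ℤ) :
    ∃ u : ℤ, (p : ℤ) ^ (j + 1) ∣ u ^ 2 - (1 + p ^ j * s) := by
  obtain ⟨h, rfl⟩ := hp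
  obtain ⟨k, rfl⟩ := Nat.exists_eq_add_of_le' hj
  set q : ℤ := ((2 * h + 1 : ℕ) : ℤ) with hq
  push_cast at hq
  refine ⟨1 + q ^ (k + 1) * s * (h + 1), s + q ^ k * s ^ 2 * (h + 1) ^ 2, ?_⟩
  linear_combination (-q ^ (k + 1) * s) * hq

lemma exists_sq_dvd_sub_two {j : ℕ} (hj : 3 ≤ j) (s : ℤ) :
    ∃ u : ℤ, (2 : ℤ) ^ (j + 1) ∣ u ^ 2 - (1 + 2 ^ j * s) := by
  obtain ⟨k, rfl⟩ := Nat.exists_eq_add_of_le' hj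
  exact ⟨1 + 2 ^ (k + 2) * s, 2 ^ k * s ^ 2, by ring⟩

lemma normalizedCount_two_three : normalizedCount 2 3 = 3 / 4 := by
  rw [normalizedCount]
  change _ * (Nat.card {w : Fin 3 → ZMod 8 × ZMod 8 | lorentzForm w = -1} : ℝ) = _
  rw [natCard_lorentzForm_zmod_eight]
  norm_num [zpow_neg]

lemma normalizedCount_one {p : ℕ} (hp : p.Prime) (hp2 : p ≠ 2) :
    normalizedCount p 1 = 1 - chiFourDivCube p := by
  have : Fact p.Prime := ⟨hp⟩
  have hF : ringChar (ZMod p) ≠ 2 := by rwa [ZMod.ringChar_zmod_n]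
  have hp0 : (p : ℝ) ≠ 0 := by exact_mod_cast hp.ne_zero
  have h := congrArg (Int.cast (R := ℝ)) (natCard_lorentzForm_field hF)
  rw [quadraticChar_neg_one hF, ZMod.card] at h
  push_cast at h
  rw [normalizedCount, pow_one, h, chiFourDivCube_apply]
  push_cast
  rw [zpow_neg, show (p : ℝ) ^ (5 : ℤ) = (p : ℝ) ^ 5 by norm_cast]
  field_simp

lemma tendsto_normalizedCount_localDensity {p : ℕ} (hp : p.Prime) :
    Tendsto (normalizedCount p) atTop (𝓝 (localDensity p)) := by
  rw [localDensity]
  split_ifs with hp2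
  · subst hp2
    rw [← normalizedCount_two_three]
    exact tendsto_normalizedCount fun j hj => normalizedCount_succ hp
      (by exact_mod_cast exists_sq_dvd_sub_two hj) (by omega)
  · rw [← normalizedCount_one hp hp2]
    exact tendsto_normalizedCount fun j hj => normalizedCount_succ hp
      (exists_sq_dvd_sub_of_odd (hp.odd_of_ne_two hp2) hj) hj

end Density

/-- Local density computation for `Q = I_{2,1}` over the Gaussian integers and
`k = 1`: for every prime `p` the limit
`δ_p = lim_j p^{−5j}·#{x ∈ (ℤ[i]/p^jℤ[i])³ : x₁x̄₁ + x₂x̄₂ − x₃x̄₃ = −1}` exists,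
and `∏_p δ_p = 2³·3·π^{−3} = 24/π³`.
(Residue classes mod `p^j` are counted via lifts: a class `y` is counted when some
(equivalently, any) lift `x` of `y` satisfies `p^j ∣ x₁x̄₁ + x₂x̄₂ − x₃x̄₃ + 1` in `ℤ[i]`.) -/
theorem local_density_I21_gaussian :
    ∃ δp : ℕ → ℝ,
      (∀ p : ℕ, p.Prime →
        Tendsto (fun j : ℕ =>
            ((p : ℝ) ^ (-(5 * j : ℤ))) *
            (Nat.card {y : Fin 3 → (GaussianInt ⧸ Ideal.span {((p : GaussianInt)) ^ j}) |
              ∃ x : Fin 3 → GaussianInt,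
                (∀ i, Ideal.Quotient.mk (Ideal.span {((p : GaussianInt)) ^ j}) (x i) = y i) ∧
                (p : GaussianInt) ^ j ∣
                  star (x 0) * x 0 + star (x 1) * x 1 - star (x 2) * x 2 + 1} : ℝ))
          atTop (nhds (δp p))) ∧
      Tendsto (fun N : ℕ => ∏ p ∈ (Finset.range N).filter Nat.Prime, δp p)
        atTop (nhds (2 ^ 3 * 3 / Real.pi ^ 3)) := by
  refine ⟨localDensity, fun p hp => ?_, tendsto_prod_localDensity⟩
  refine (tendsto_normalizedCount_localDensity hp).congr fun j => ?_
  rw [normalizedCount, natCard_gaussianInt_solutions (p ^ j) _ (Nat.cast_pow p j).symm]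
end
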